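/- arXiv:2512.21192 — 2 statements merged into one kernel-verified Lean document; each statement's English description precedes it below -/
import Mathlib

section
/- For every q ∈ [0,1] there exists an integer N such that for all n ≥ N, S(q, n+1) < S(q, n); that is, the expected number of searched items is eventually strictly decreasing in the number of available options. -/
/-- The regret-minimizing probability of opening another box when `k` boxes remain. -/
noncomputable def alphaStar (ubar c : ℝ) (k : ℕ) : ℝ :=
  (k : ℝ) * (ubar - c) ^ k / (((k : ℝ) - 1) * (ubar - c) ^ k + ubar ^ k)

/-- Expected number of boxes opened under the regret-minimizing search rule when
the true data-generating process is i.i.d. with success probability `q`: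
`S(q,n) = Σ_{i=1}^n (1-q)^{n-i} ∏_{j=i}^n α_j*`. -/
noncomputable def expSearch (ubar c q : ℝ) (n : ℕ) : ℝ :=
  ∑ i ∈ Finset.Icc 1 n, (1 - q) ^ (n - i) * ∏ j ∈ Finset.Icc i n, alphaStar ubar c j

/-!
Conditioning on the first box gives `S(q, n+1) = α*_{n+1} (1 + (1-q) S(q, n))`. Put
`r = (ū - c) / ū`, so that `0 < r < 1` and `α*_k = k r ^ k / ((k - 1) r ^ k + 1)`. As `α*_k → 0`,
the recursion forces `S(q, n) → 0`, and feeding this back into it gives `S(q, n) ~ α*_n ~ n r ^ n`.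
Hence the ratio of consecutive terms of `S(q, ·)` tends to `r < 1`.
-/

open Filter Asymptotics Topology

section AffineRecursion

variable {R : Type*}

lemma isBoundedUnder_norm_of_affine_recursion [NonUnitalSeminormedRing R] {a b x : ℕ → R}
    (hx : ∀ n, x (n + 1) = b n + a n * x n) (ha : Tendsto a atTop (𝓝 0))
    (hb : IsBoundedUnder (· ≤ ·) atTop fun n ↦ ‖b n‖) :
    IsBoundedUnder (· ≤ ·) atTop fun n ↦ ‖x n‖ := by
  obtain ⟨B, hB⟩ := hb.eventually_le
  have ha_half : ∀ᶠ n in atTop, ‖a n‖ ≤ 1 / 2 :=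
    ha.norm.eventually_le_const (by norm_num)
  obtain ⟨N, hN⟩ := eventually_atTop.1 (hB.and ha_half)
  refine isBoundedUnder_of_eventually_le (a := max ‖x N‖ (2 * B)) ?_
  filter_upwards [eventually_ge_atTop N] with n hn
  induction n, hn using Nat.le_induction with
  | base => exact le_max_left _ _
  | succ n hn ih =>
    obtain ⟨hbn, han⟩ := hN n hn
    calc ‖x (n + 1)‖ ≤ ‖b n‖ + ‖a n‖ * ‖x n‖ := by
          rw [hx]; exact norm_add_le_of_le le_rfl (norm_mul_le _ _)
      _ ≤ B + 1 / 2 * max ‖x N‖ (2 * B) := by gcongr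
      _ ≤ max ‖x N‖ (2 * B) := by linarith [le_max_right ‖x N‖ (2 * B)]

lemma tendsto_of_affine_recursion [NonUnitalSeminormedRing R] {a b x : ℕ → R} {l : R}
    (hx : ∀ n, x (n + 1) = b n + a n * x n) (ha : Tendsto a atTop (𝓝 0))
    (hb : Tendsto b atTop (𝓝 l)) : Tendsto x atTop (𝓝 l) := by
  have hax : Tendsto (fun n ↦ a n * x n) atTop (𝓝 0) :=
    ha.zero_mul_isBoundedUnder_le
      (isBoundedUnder_norm_of_affine_recursion hx ha hb.norm.isBoundedUnder_le)
  rw [← tendsto_add_atTop_iff_nat 1]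
  simpa only [hx, add_zero] using hb.add hax

lemma isEquivalent_of_affine_recursion [NormedRing R] {a x : ℕ → R} {p : R}
    (hx : ∀ n, x (n + 1) = a (n + 1) * (1 + p * x n)) (ha : Tendsto a atTop (𝓝 0)) :
    x ~[atTop] a := by
  have ha_succ : Tendsto (fun n ↦ a (n + 1)) atTop (𝓝 0) := (tendsto_add_atTop_iff_nat 1).2 ha
  have hx_zero : Tendsto x atTop (𝓝 0) :=
    tendsto_of_affine_recursion (a := fun n ↦ a (n + 1) * p)
      (fun n ↦ by rw [hx, mul_add, mul_one, mul_assoc])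
      (by simpa only [zero_mul] using ha_succ.mul_const p) ha_succ
  have hpx : (fun n ↦ p * x n) =o[atTop] fun _ ↦ (1 : ℝ) :=
    (isLittleO_one_iff ℝ).2 (by simpa only [mul_zero] using hx_zero.const_mul p)
  rw [← map_add_atTop_eq_nat 1, isEquivalent_map]
  refine IsLittleO.isEquivalent ?_
  have hsub : (x ∘ (· + 1)) - (a ∘ (· + 1)) = fun n ↦ a (n + 1) * (p * x n) := by
    ext n
    simp only [Pi.sub_apply, Function.comp_apply, hx, mul_add, mul_one, add_sub_cancel_left]
  rw [hsub, ← isLittleO_norm_right]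
  simpa only [Function.comp_def, mul_one] using
    (isBigO_refl (fun n ↦ a (n + 1)) atTop).norm_right.mul_isLittleO hpx

end AffineRecursion

lemma eventually_succ_lt_of_tendsto_ratio {u : ℕ → ℝ} {r : ℝ} (hu : ∀ᶠ n in atTop, 0 < u n)
    (hratio : Tendsto (fun n ↦ u (n + 1) / u n) atTop (𝓝 r)) (hr : r < 1) :
    ∀ᶠ n in atTop, u (n + 1) < u n := by
  filter_upwards [hu, hratio.eventually_lt_const hr] with n hpos hlt
  exact (div_lt_one hpos).1 hlt

lemma tendsto_ratio_of_isEquivalent {𝕜 : Type*} [NormedField 𝕜] {u v : ℕ → 𝕜} {r : 𝕜}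
    (huv : u ~[atTop] v) (hv : Tendsto (fun n ↦ v (n + 1) / v n) atTop (𝓝 r)) :
    Tendsto (fun n ↦ u (n + 1) / u n) atTop (𝓝 r) :=
  ((huv.comp_tendsto (tendsto_add_atTop_nat 1)).div huv).symm.tendsto_nhds hv

lemma tendsto_ratio_natCast_mul_pow {r : ℝ} (hr : r ≠ 0) :
    Tendsto (fun n : ℕ ↦ ((n + 1 : ℕ) * r ^ (n + 1)) / (n * r ^ n)) atTop (𝓝 r) := by
  have hcast : Tendsto (fun n : ℕ ↦ ((n : ℝ) / (n + 1))⁻¹ * r) atTop (𝓝 r) := by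
    simpa only [inv_one, one_mul] using
      ((tendsto_natCast_div_add_atTop (1 : ℝ)).inv₀ one_ne_zero).mul_const r
  refine hcast.congr fun n ↦ ?_
  rw [inv_div, pow_succ', ← mul_assoc, mul_div_mul_right _ _ (pow_ne_zero n hr), mul_div_right_comm,
    Nat.cast_succ]

lemma tendsto_sub_one_mul_pow_of_abs_lt_one {r : ℝ} (hr : |r| < 1) :
    Tendsto (fun k : ℕ ↦ ((k : ℝ) - 1) * r ^ k) atTop (𝓝 0) := by
  simpa only [sub_mul, one_mul, sub_zero] using
    (tendsto_self_mul_const_pow_of_abs_lt_one hr).sub (tendsto_pow_atTop_nhds_zero_of_abs_lt_one hr)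

section Search

variable {ubar c : ℝ}

lemma alphaStar_eq (hu : ubar ≠ 0) (c : ℝ) (k : ℕ) :
    alphaStar ubar c k =
      k * ((ubar - c) / ubar) ^ k / ((k - 1) * ((ubar - c) / ubar) ^ k + 1) := by
  have hk : ubar ^ k ≠ 0 := pow_ne_zero k hu
  rw [alphaStar, div_pow, ← mul_div_assoc, ← mul_div_assoc, div_add_one hk,
    div_div_div_cancel_right₀ hk]

lemma abs_sub_div_lt_one (h : |ubar - c| < |ubar|) : |(ubar - c) / ubar| < 1 := by
  rw [abs_div]
  exact (div_lt_one ((abs_nonneg _).trans_lt h)).2 h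

lemma alphaStar_isEquivalent (h : |ubar - c| < |ubar|) :
    alphaStar ubar c ~[atTop] fun k ↦ k * ((ubar - c) / ubar) ^ k := by
  have hu : ubar ≠ 0 := abs_pos.1 ((abs_nonneg _).trans_lt h)
  have hdenom : (fun k : ℕ ↦ ((k : ℝ) - 1) * ((ubar - c) / ubar) ^ k + 1) ~[atTop] fun _ ↦ 1 :=
    (isEquivalent_const_iff_tendsto one_ne_zero).2 <| by
      simpa only [zero_add] using
        (tendsto_sub_one_mul_pow_of_abs_lt_one (abs_sub_div_lt_one h)).add_const 1
  simpa only [Pi.div_def, ← alphaStar_eq hu, div_one] using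
    (IsEquivalent.refl (u := fun k : ℕ ↦ (k : ℝ) * ((ubar - c) / ubar) ^ k)).div hdenom

lemma tendsto_alphaStar_atTop (h : |ubar - c| < |ubar|) :
    Tendsto (alphaStar ubar c) atTop (𝓝 0) :=
  (alphaStar_isEquivalent h).symm.tendsto_nhds
    (tendsto_self_mul_const_pow_of_abs_lt_one (abs_sub_div_lt_one h))

lemma expSearch_succ (ubar c q : ℝ) (n : ℕ) :
    expSearch ubar c q (n + 1) =
      alphaStar ubar c (n + 1) * (1 + (1 - q) * expSearch ubar c q n) := by
  have hterm : ∀ i ∈ Finset.Icc 1 n,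
      (1 - q) ^ (n + 1 - i) * ∏ j ∈ Finset.Icc i (n + 1), alphaStar ubar c j =
        alphaStar ubar c (n + 1) *
          ((1 - q) * ((1 - q) ^ (n - i) * ∏ j ∈ Finset.Icc i n, alphaStar ubar c j)) := by
    intro i hi
    have hin : i ≤ n := (Finset.mem_Icc.1 hi).2
    rw [Finset.prod_Icc_succ_top (by lia), Nat.sub_add_comm hin, pow_succ]
    ring
  rw [expSearch, Finset.sum_Icc_succ_top (by lia), Finset.sum_congr rfl hterm, ← Finset.mul_sum,
    ← Finset.mul_sum, ← expSearch, Nat.sub_self, pow_zero, Finset.Icc_self, Finset.prod_singleton]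
  ring

lemma expSearch_isEquivalent (h : |ubar - c| < |ubar|) (q : ℝ) :
    expSearch ubar c q ~[atTop] fun n ↦ n * ((ubar - c) / ubar) ^ n :=
  (isEquivalent_of_affine_recursion (expSearch_succ ubar c q) (tendsto_alphaStar_atTop h)).trans
    (alphaStar_isEquivalent h)

end Search

theorem expSearch_eventually_strictly_decreasing_general (ubar c : ℝ) (hc : 0 < c)
    (hcu : c < ubar) (q : ℝ) :
    ∃ N : ℕ, ∀ n : ℕ, N ≤ n → expSearch ubar c q (n + 1) < expSearch ubar c q n := by
  have hu : 0 < ubar := hc.trans hcu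
  have hr_pos : 0 < (ubar - c) / ubar := div_pos (sub_pos.2 hcu) hu
  have hr_lt_one : (ubar - c) / ubar < 1 := (div_lt_one hu).2 (sub_lt_self _ hc)
  have h_abs : |ubar - c| < |ubar| := by
    rw [abs_of_pos (sub_pos.2 hcu), abs_of_pos hu]; exact sub_lt_self _ hc
  have h_equiv := expSearch_isEquivalent h_abs q
  have h_pos : ∀ᶠ n in atTop, 0 < expSearch ubar c q n := by
    refine h_equiv.eventually_pos ?_
    filter_upwards [eventually_gt_atTop 0] with n hn
    positivity
  exact eventually_atTop.1 <| eventually_succ_lt_of_tendsto_ratio h_pos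
    (tendsto_ratio_of_isEquivalent h_equiv (tendsto_ratio_natCast_mul_pow hr_pos.ne')) hr_lt_one

/-- For every `q ∈ [0,1]` the expected number of searched items `S(q,n)` is
eventually strictly decreasing in the number of available options `n`. -/
theorem expSearch_eventually_strictly_decreasing (ubar c : ℝ) (hc : 0 < c) (hcu : c < ubar)
    (q : ℝ) (hq : q ∈ Set.Icc (0:ℝ) 1) :
    ∃ N : ℕ, ∀ n : ℕ, N ≤ n → expSearch ubar c q (n + 1) < expSearch ubar c q n :=
  expSearch_eventually_strictly_decreasing_general ubar c hc hcu q
end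

section
/- Let N be a finite set of positive integers and, for each j ∈ N, let p̂_j ∈ (0,1); let Δ : N ∪ {0} → ℝ be nondecreasing with Δ_0 := 0, and define ψ(k, M) := ∏_{j ∈ M, j > k} (1 − p̂_j). Then for every i ∈ N and every ℓ ∈ (N ∪ {0}) with ℓ < i: ψ(i, N) · (Δ_i − Δ_ℓ) ≥ Σ_{k ∈ N, ℓ < k < i} p̂_k · ψ(k, N \ {i}) · (Δ_k − Δ_ℓ), with equality if Δ_i = Δ_ℓ and strict inequality if Δ_i > Δ_ℓ. (Equivalently, the coefficients B_{ℓi} in the first-order conditions of the heterogeneous saddle point are nonnegative, using the identity Σ_{k ∈ N, ℓ<k<i} p̂_k ∏_{j ∈ N, k<j<i}(1−p̂_j) = 1 − ∏_{j ∈ N, ℓ<j<i}(1−p̂_j) < 1.) -/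
/-- `ψ(k, M) = ∏_{j ∈ M, j > k} (1 - p̂_j)`: under beliefs `p̂`, the probability
that all boxes in `M` with index above `k` fail. -/
noncomputable def psiProd (phat : ℕ → ℝ) (k : ℕ) (M : Finset ℕ) : ℝ :=
  ∏ j ∈ M.filter (fun j => k < j), (1 - phat j)

/-!
Both sides have the factor `ψ(i, N)`, since `ψ(k, N \ {i})` leaves out box `i`. What remains are the
weights `p k * ∏_{k < j < i} (1 - p j)`, the probability that `k` is the highest successful box
strictly between `l` and `i`; together with `∏_{l < j < i} (1 - p j)`, the probability that no box
between them succeeds, they sum to `1`. Splitting `Δ i - Δ l` as `(Δ k - Δ l) + (Δ i - Δ k)` under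
each weight exhibits the difference of the two sides as a nonnegative combination of `Δ i - Δ l`
and the `Δ i - Δ k`, in which `Δ i - Δ l` has positive weight.
-/

open Finset

section Identities

variable {ι R : Type*} [LinearOrder ι]

theorem prod_sdiff_singleton_filter_lt [CommMonoid R] (s : Finset ι) (f : ι → R) {k i : ι}
    (hki : k < i) :
    ∏ j ∈ s \ {i} with k < j, f j
      = (∏ j ∈ s with k < j ∧ j < i, f j) * ∏ j ∈ s with i < j, f j := by
  have hdisj : Disjoint {j ∈ s | k < j ∧ j < i} {j ∈ s | i < j} :=
    disjoint_filter.2 fun _ _ hj => hj.2.not_gt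
  rw [← prod_union hdisj]
  congr 1
  ext j
  simp only [mem_filter, mem_union, mem_sdiff, mem_singleton]
  grind

variable [CommRing R]

theorem sum_mul_prod_one_sub_filter_lt (s : Finset ι) (p : ι → R) :
    ∑ k ∈ s, p k * ∏ j ∈ s with k < j, (1 - p j) = 1 - ∏ j ∈ s, (1 - p j) :=
  eq_sub_of_add_eq' <| eq_sub_iff_add_eq.1 <| prod_one_sub_ordered (ι := ιᵒᵈ) s p

theorem sum_mul_prod_one_sub_between (s : Finset ι) (p : ι → R) (l i : ι) :
    ∑ k ∈ s with l < k ∧ k < i, p k * ∏ j ∈ s with k < j ∧ j < i, (1 - p j)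
      = 1 - ∏ j ∈ s with l < j ∧ j < i, (1 - p j) := by
  rw [← sum_mul_prod_one_sub_filter_lt]
  refine sum_congr rfl fun k hk => ?_
  have hlk : l < k := (mem_filter.1 hk).2.1
  rw [filter_filter]
  congr 2
  exact filter_congr fun j _ =>
    ⟨fun h => ⟨⟨hlk.trans h.1, h.2⟩, h.1⟩, fun h => ⟨h.2, h.1.2⟩⟩

theorem prod_one_sub_mul_sub_eq_sum_add (s : Finset ι) (p Δ : ι → R) (l i : ι) :
    (∏ j ∈ s with i < j, (1 - p j)) * (Δ i - Δ l)
      = (∑ k ∈ s with l < k ∧ k < i, p k * (∏ j ∈ s \ {i} with k < j, (1 - p j)) * (Δ k - Δ l))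
        + (∏ j ∈ s with i < j, (1 - p j))
          * ((∏ j ∈ s with l < j ∧ j < i, (1 - p j)) * (Δ i - Δ l)
            + ∑ k ∈ s with l < k ∧ k < i,
                p k * (∏ j ∈ s with k < j ∧ j < i, (1 - p j)) * (Δ i - Δ k)) := by
  set ψ := ∏ j ∈ s with i < j, (1 - p j)
  set pNone := ∏ j ∈ s with l < j ∧ j < i, (1 - p j)
  let pTop (k : ι) := p k * ∏ j ∈ s with k < j ∧ j < i, (1 - p j)
  have total : ∑ k ∈ s with l < k ∧ k < i, pTop k = 1 - pNone :=
    sum_mul_prod_one_sub_between s p l i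
  have factor : ∑ k ∈ s with l < k ∧ k < i,
        p k * (∏ j ∈ s \ {i} with k < j, (1 - p j)) * (Δ k - Δ l)
      = ψ * ∑ k ∈ s with l < k ∧ k < i, pTop k * (Δ k - Δ l) := by
    rw [mul_sum]
    refine sum_congr rfl fun k hk => ?_
    rw [prod_sdiff_singleton_filter_lt s _ (mem_filter.1 hk).2.2]
    ring
  have telescope : (∑ k ∈ s with l < k ∧ k < i, pTop k * (Δ k - Δ l))
        + ∑ k ∈ s with l < k ∧ k < i, pTop k * (Δ i - Δ k)
      = (1 - pNone) * (Δ i - Δ l) := by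
    rw [← total, sum_mul, ← sum_add_distrib]
    exact sum_congr rfl fun k _ => by ring
  rw [factor]
  linear_combination -ψ * telescope

end Identities

theorem prod_one_sub_pos {ι R : Type*} [CommRing R] [PartialOrder R] [IsStrictOrderedRing R]
    {s : Finset ι} {p : ι → R} (hp : ∀ j ∈ s, p j < 1) : 0 < ∏ j ∈ s, (1 - p j) :=
  prod_pos fun j hj => sub_pos.2 (hp j hj)

theorem het_coefficients_nonneg_general {ι R : Type*} [LinearOrder ι] [CommRing R] [PartialOrder R]
    [IsStrictOrderedRing R] (N : Finset ι) (p Δ : ι → R) (hp : ∀ j ∈ N, p j ∈ Set.Ico 0 1)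
    {i l : ι} (hi : i ∈ N) (hli : l < i) (hΔ : MonotoneOn Δ (insert l N)) :
    ((∑ k ∈ N with l < k ∧ k < i, p k * (∏ j ∈ N \ {i} with k < j, (1 - p j)) * (Δ k - Δ l))
      ≤ (∏ j ∈ N with i < j, (1 - p j)) * (Δ i - Δ l)) ∧
    (Δ i = Δ l →
      (∏ j ∈ N with i < j, (1 - p j)) * (Δ i - Δ l) =
        ∑ k ∈ N with l < k ∧ k < i, p k * (∏ j ∈ N \ {i} with k < j, (1 - p j)) * (Δ k - Δ l)) ∧
    (Δ l < Δ i →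
      (∑ k ∈ N with l < k ∧ k < i, p k * (∏ j ∈ N \ {i} with k < j, (1 - p j)) * (Δ k - Δ l))
        < (∏ j ∈ N with i < j, (1 - p j)) * (Δ i - Δ l)) ∧
    ((∑ k ∈ N with l < k ∧ k < i, p k * ∏ j ∈ N with k < j ∧ j < i, (1 - p j))
      = 1 - ∏ j ∈ N with l < j ∧ j < i, (1 - p j)) ∧
    1 - ∏ j ∈ N with l < j ∧ j < i, (1 - p j) < 1 := by
  have hprod (q : ι → Prop) [DecidablePred q] : 0 < ∏ j ∈ N with q j, (1 - p j) :=
    prod_one_sub_pos fun j hj => (hp j (mem_of_mem_filter j hj)).2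
  have hΔli : Δ l ≤ Δ i := hΔ (.inl rfl) (.inr hi) hli.le
  have hΔki {k : ι} (hk : k ∈ N.filter fun k => l < k ∧ k < i) : Δ k ≤ Δ i :=
    hΔ (.inr (mem_of_mem_filter k hk)) (.inr hi) (mem_filter.1 hk).2.2.le
  have hΔlk {k : ι} (hk : k ∈ N.filter fun k => l < k ∧ k < i) : Δ l ≤ Δ k :=
    hΔ (.inl rfl) (.inr (mem_of_mem_filter k hk)) (mem_filter.1 hk).2.1.le
  have hincr : 0 ≤ ∑ k ∈ N with l < k ∧ k < i,
      p k * (∏ j ∈ N with k < j ∧ j < i, (1 - p j)) * (Δ i - Δ k) :=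
    sum_nonneg fun k hk => mul_nonneg
      (mul_nonneg (hp k (mem_of_mem_filter k hk)).1 (hprod _).le) (sub_nonneg.2 (hΔki hk))
  refine ⟨?_, fun heq => ?_, fun hlt => ?_, sum_mul_prod_one_sub_between N p l i,
    sub_lt_self 1 (hprod _)⟩
  · rw [prod_one_sub_mul_sub_eq_sum_add N p Δ l i]
    exact le_add_of_nonneg_right <| mul_nonneg (hprod _).le <|
      add_nonneg (mul_nonneg (hprod _).le (sub_nonneg.2 hΔli)) hincr
  · rw [heq, sub_self, mul_zero, sum_eq_zero]
    intro k hk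
    have hkl : Δ k = Δ l := ((hΔki hk).trans_eq heq).antisymm (hΔlk hk)
    rw [hkl, sub_self, mul_zero]
  · rw [prod_one_sub_mul_sub_eq_sum_add N p Δ l i]
    exact lt_add_of_pos_right _ <| mul_pos (hprod _) <|
      add_pos_of_pos_of_nonneg (mul_pos (hprod _) (sub_pos.2 hlt)) hincr

/-- Nonnegativity of the coefficients `B_{ℓi}` (Theorem 6): with
`p̂_j ∈ (0,1)` and `Δ` nondecreasing on `N ∪ {0}` with `Δ_0 = 0`, for every
`i ∈ N` and `ℓ ∈ N ∪ {0}` with `ℓ < i`: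
`Σ_{k ∈ N, ℓ<k<i} p̂_k ψ(k, N\{i})(Δ_k - Δ_ℓ) ≤ ψ(i,N)(Δ_i - Δ_ℓ)`,
with equality if `Δ_i = Δ_ℓ` and strict inequality if `Δ_i > Δ_ℓ`; moreover
`Σ_{k ∈ N, ℓ<k<i} p̂_k ∏_{j ∈ N, k<j<i}(1-p̂_j) = 1 - ∏_{j ∈ N, ℓ<j<i}(1-p̂_j) < 1`. -/
theorem het_coefficients_nonneg (N : Finset ℕ) (phat Δ : ℕ → ℝ)
    (hidx : ∀ j ∈ N, 0 < j)
    (hp : ∀ j ∈ N, phat j ∈ Set.Ioo (0:ℝ) 1)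
    (hΔ0 : Δ 0 = 0)
    (hmono : ∀ i ∈ insert 0 N, ∀ k ∈ insert 0 N, i ≤ k → Δ i ≤ Δ k) :
    ∀ i ∈ N, ∀ l ∈ insert 0 N, l < i →
      ((∑ k ∈ N.filter (fun k => l < k ∧ k < i),
          phat k * psiProd phat k (N \ {i}) * (Δ k - Δ l))
        ≤ psiProd phat i N * (Δ i - Δ l)) ∧
      (Δ i = Δ l →
        psiProd phat i N * (Δ i - Δ l) =
          ∑ k ∈ N.filter (fun k => l < k ∧ k < i),
            phat k * psiProd phat k (N \ {i}) * (Δ k - Δ l)) ∧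
      (Δ l < Δ i →
        (∑ k ∈ N.filter (fun k => l < k ∧ k < i),
            phat k * psiProd phat k (N \ {i}) * (Δ k - Δ l))
          < psiProd phat i N * (Δ i - Δ l)) ∧
      ((∑ k ∈ N.filter (fun k => l < k ∧ k < i),
          phat k * ∏ j ∈ N.filter (fun j => k < j ∧ j < i), (1 - phat j))
        = 1 - ∏ j ∈ N.filter (fun j => l < j ∧ j < i), (1 - phat j)) ∧
      ((1 : ℝ) - ∏ j ∈ N.filter (fun j => l < j ∧ j < i), (1 - phat j)) < 1 := by
  intro i hi l hl hli
  have hΔ : MonotoneOn Δ (insert l N) := fun a ha b hb =>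
    hmono a (insert_subset hl (subset_insert 0 N) (by simpa using ha)) b
      (insert_subset hl (subset_insert 0 N) (by simpa using hb))
  exact het_coefficients_nonneg_general N phat Δ (fun j hj => Set.Ioo_subset_Ico_self (hp j hj))
    hi hli hΔ
end
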